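/- Fix an integer r ≥ 3 and let A = exp(πi/(2r)). Then the sum of Δ_i · Δ_j · Δ_k over all admissible triples (i,j,k) ∈ I^3 equals (Σ_{n=0}^{r−2} Δ_n^2)^2; that is, the computation of the invariant of the trivial genus-2 handlebody-knot via a theta-curve diagram agrees with the computation via a handcuffs diagram. -/

import Mathlib

/-- The variable `A = exp(πi/(2r))`. -/
noncomputable def A (r : ℕ) : ℂ := Complex.exp (Real.pi * Complex.I / (2 * r))

/-- The quantum dimension `Δ_n = (−1)^n (A^{2(n+1)} − A^{−2(n+1)})/(A^2 − A^{−2})`. -/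
noncomputable def Δ (r : ℕ) (n : ℕ) : ℂ :=
  (-1) ^ n * (A r ^ (2 * ((n : ℤ) + 1)) - A r ^ (-(2 * ((n : ℤ) + 1)))) /
    (A r ^ (2 : ℤ) - A r ^ (-2 : ℤ))

/-- A triple `(i,j,k)` of colors in `I = {0,…,r−2}` is *admissible* if
`i ≤ j+k`, `j ≤ i+k`, `k ≤ i+j`, `i+j+k` is even, and `i+j+k ≤ 2(r−2)`. -/
def Admissible (r i j k : ℕ) : Prop :=
  i ≤ r - 2 ∧ j ≤ r - 2 ∧ k ≤ r - 2 ∧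
  i ≤ j + k ∧ j ≤ i + k ∧ k ≤ i + j ∧ 2 ∣ (i + j + k) ∧ i + j + k ≤ 2 * (r - 2)

instance (r i j k : ℕ) : Decidable (Admissible r i j k) := by
  unfold Admissible; infer_instance

/-! The quantum dimensions are values of rescaled Chebyshev polynomials, `Δ n = S n (-A² - A⁻²)`,
and `Δ (r - 1) = 0`. This vanishing alone implies the fusion rule: `Δ i * Δ j` is the sum of `Δ k`
over the `k` for which `(i, j, k)` is admissible. If `i + j ≤ r - 2`, this is the Clebsch-Gordan
formula for `S`. Replacing `i` and `j` by `r - 2 - i` and `r - 2 - j` changes neither `Δ i * Δ j`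
nor the admissible `k`, and brings every other pair into that range. Summing the fusion rule against
`Δ i * Δ j` proves the theorem. -/

open Finset Polynomial Polynomial.Chebyshev

section Chebyshev

variable {R : Type*} [CommRing R]

lemma chebyshev_S_add (m n : ℤ) :
    S R (m + n) = S R m * S R n - S R (m - 1) * S R (n - 1) := by
  induction n using Polynomial.Chebyshev.induct with
  | zero => simp
  | one => simp [S_add_one, mul_comm]
  | add_two n ih₁ ih₀ =>
    have h_add := S_add_two R (m + n)
    have h_n := S_add_two R n
    have h_pred := S_add_one R n
    linear_combination (norm := ring_nf)
      h_add - S R m * h_n + S R (m - 1) * h_pred + (X : R[X]) * ih₁ - ih₀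
  | neg_add_one n ih₀ ih₁ =>
    have h_add := S_sub_one R (m - n)
    have h_n := S_sub_one R (-n)
    have h_pred := S_sub_one R (-n - 1)
    linear_combination (norm := ring_nf)
      h_add - S R m * h_n + S R (m - 1) * h_pred + (X : R[X]) * ih₀ - ih₁

lemma chebyshev_S_mul_S (m : ℤ) (n : ℕ) :
    S R m * S R n = ∑ t ∈ range (n + 1), S R (m - n + 2 * t) := by
  induction n generalizing m with
  | zero => simp
  | succ n ih =>
    push_cast
    calc
      S R m * S R (n + 1) = S R (m - 1) * S R n + S R (m + (n + 1)) := by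
        rw [chebyshev_S_add m, add_sub_cancel_right]
        ring
      _ = ∑ t ∈ range (n + 1), S R (m - 1 - n + 2 * t) + S R (m + (n + 1)) := by rw [ih]
      _ = ∑ t ∈ range (n + 1 + 1), S R (m - (n + 1) + 2 * t) := by
        rw [sum_range_succ _ (n + 1)]
        push_cast
        ring_nf

variable {x : R} {p : ℤ}

lemma eval_S_sub_one_sub (hx : (S R p).eval x = 0) (n : ℤ) :
    (S R (p - 1 - n)).eval x = (S R (p - 1)).eval x * (S R n).eval x := by
  rw [show p - 1 - n = p + (-n - 1) by ring, chebyshev_S_add,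
    show -n - 1 - 1 = -n - 2 by ring, S_neg_sub_two]
  simp [hx]

lemma eval_S_sub_one_sub_mul (hx : (S R p).eval x = 0) (m n : ℤ) :
    (S R (p - 1 - m)).eval x * (S R (p - 1 - n)).eval x = (S R m).eval x * (S R n).eval x := by
  have h_sq : (S R (p - 1)).eval x * (S R (p - 1)).eval x = 1 := by
    rw [← eval_S_sub_one_sub hx, sub_self, S_zero, eval_one]
  rw [eval_S_sub_one_sub hx m, eval_S_sub_one_sub hx n, mul_mul_mul_comm, h_sq, one_mul]

lemma sub_inv_mul_eval_S_add_inv {K : Type*} [Field K] {q : K} (hq : q ≠ 0) (n : ℤ) :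
    (q - q⁻¹) * (S K n).eval (q + q⁻¹) = q ^ (n + 1) - q ^ (-(n + 1)) := by
  induction n using Polynomial.Chebyshev.induct with
  | zero => simp
  | one =>
    simp only [S_one, eval_X, zpow_neg, zpow_add₀ hq, zpow_one]
    field_simp
    ring
  | add_two n ih₁ ih₀ =>
    rw [S_add_two, eval_sub, eval_mul, eval_X, mul_sub, mul_left_comm, ih₁, ih₀]
    simp only [zpow_neg, zpow_add₀ hq, zpow_ofNat, zpow_natCast]
    field_simp
    ring
  | neg_add_one n ih₀ ih₁ =>
    rw [S_sub_one, eval_sub, eval_mul, eval_X, mul_sub, mul_left_comm, ih₁, ih₀]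
    simp only [zpow_neg, zpow_sub₀ hq, zpow_add₀ hq, zpow_natCast, zpow_one]
    field_simp
    ring

end Chebyshev

section Admissible

variable {r i j k : ℕ}

lemma admissible_comm : Admissible r i j k ↔ Admissible r j i k := by
  unfold Admissible
  omega

lemma admissible_sub_sub (hi : i ≤ r - 2) (hj : j ≤ r - 2) :
    Admissible r (r - 2 - i) (r - 2 - j) k ↔ Admissible r i j k := by
  unfold Admissible
  omega

lemma sum_admissible_of_add_lt {M : Type*} [AddCommMonoid M] (f : ℕ → M)
    (hji : j ≤ i) (hij : i + j < r - 1) :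
    ∑ k ∈ range (r - 1) with Admissible r i j k, f k = ∑ t ∈ range (j + 1), f (i - j + 2 * t) := by
  have h_image : {k ∈ range (r - 1) | Admissible r i j k} =
      (range (j + 1)).image (fun t => i - j + 2 * t) := by
    ext k
    rw [mem_filter, mem_image]
    simp only [mem_range, Admissible]
    constructor
    · rintro ⟨-, hk⟩
      exact ⟨(k - (i - j)) / 2, by omega, by omega⟩
    · rintro ⟨t, ht, rfl⟩
      omega
  rw [h_image, sum_image fun s _ t _ hst => by simpa using hst]

end Admissible

section Fusion

variable {R : Type*} [CommRing R] {x : R} {r i j : ℕ}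

lemma sum_admissible_eval_S_of_add_lt (hji : j ≤ i) (hij : i + j < r - 1) :
    ∑ k ∈ range (r - 1) with Admissible r i j k, (S R k).eval x =
      (S R i).eval x * (S R j).eval x := by
  rw [sum_admissible_of_add_lt _ hji hij, ← eval_mul, chebyshev_S_mul_S, eval_finsetSum]
  exact sum_congr rfl fun t _ => by push_cast [hji]; rfl

lemma sum_admissible_eval_S (hx : (S R (r - 1)).eval x = 0) (hi : i < r - 1) (hj : j < r - 1) :
    ∑ k ∈ range (r - 1) with Admissible r i j k, (S R k).eval x =
      (S R i).eval x * (S R j).eval x := by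
  wlog hji : j ≤ i generalizing i j
  · simpa only [admissible_comm (i := i), mul_comm] using this hj hi (le_of_not_ge hji)
  rcases lt_or_ge (i + j) (r - 1) with hij | hij
  · exact sum_admissible_eval_S_of_add_lt hji hij
  have hi' : i ≤ r - 2 := by omega
  have hj' : j ≤ r - 2 := by omega
  have h_cast {n : ℕ} (hn : n ≤ r - 2) : ((r - 2 - n : ℕ) : ℤ) = (r : ℤ) - 1 - 1 - n := by omega
  calc
    _ = ∑ k ∈ range (r - 1) with Admissible r (r - 2 - j) (r - 2 - i) k, (S R k).eval x := by
      simp only [admissible_sub_sub hj' hi', admissible_comm (i := i)]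
    _ = (S R (r - 2 - j : ℕ)).eval x * (S R (r - 2 - i : ℕ)).eval x :=
      sum_admissible_eval_S_of_add_lt (by omega) (by omega)
    _ = (S R i).eval x * (S R j).eval x := by
      rw [h_cast hi', h_cast hj', eval_S_sub_one_sub_mul hx, mul_comm]

end Fusion

section QuantumDimension

variable {r : ℕ}

/-- The value `-A² - A⁻²` of the Kauffman bracket on a single loop. -/
noncomputable def loopValue (r : ℕ) : ℂ := -A r ^ 2 - (A r ^ 2)⁻¹

lemma A_zpow_sub_zpow_neg (r : ℕ) (m : ℤ) :
    A r ^ (2 * m) - A r ^ (-(2 * m)) = 2 * Complex.I * Complex.sin (Real.pi * m / r) := by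
  have h_exp (l : ℤ) : A r ^ (2 * l) = Complex.exp (Real.pi * l / r * Complex.I) := by
    rw [A, ← Complex.exp_int_mul]
    congr 1
    push_cast
    ring
  rw [mul_right_comm, Complex.two_sin, ← mul_neg, h_exp, h_exp, mul_assoc, Complex.I_mul_I]
  push_cast
  ring_nf

lemma A_sq_sub_inv_ne_zero (hr : 2 ≤ r) : A r ^ 2 - (A r ^ 2)⁻¹ ≠ 0 := by
  have hr' : (1 : ℝ) < r := by exact_mod_cast hr
  have h_sin : Real.sin (Real.pi / r) ≠ 0 :=
    (Real.sin_pos_of_pos_of_lt_pi (by positivity) (div_lt_self Real.pi_pos hr')).ne'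
  have h_eq : A r ^ 2 - (A r ^ 2)⁻¹ = 2 * Complex.I * (Real.sin (Real.pi / r) : ℂ) := by
    simpa [zpow_ofNat] using A_zpow_sub_zpow_neg r 1
  rw [h_eq]
  exact mul_ne_zero (mul_ne_zero two_ne_zero Complex.I_ne_zero) (Complex.ofReal_ne_zero.2 h_sin)

lemma Δ_eq_eval_S (hr : 2 ≤ r) (n : ℕ) : Δ r n = (S ℂ n).eval (loopValue r) := by
  have hA : A r ≠ 0 := Complex.exp_ne_zero _
  have h_loop : loopValue r = -A r ^ 2 + (-A r ^ 2)⁻¹ := by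
    rw [loopValue, inv_neg, sub_eq_add_neg]
  have h_S := sub_inv_mul_eval_S_add_inv (neg_ne_zero.2 (pow_ne_zero 2 hA)) n
  have h_pow : (-A r ^ 2) ^ ((n : ℤ) + 1) = -((-1) ^ n * A r ^ (2 * ((n : ℤ) + 1))) := by
    rw [zpow_mul, zpow_ofNat, ← Nat.cast_succ, zpow_natCast, zpow_natCast, neg_pow, pow_succ]
    ring
  have h_inv : ((-1 : ℂ) ^ n)⁻¹ = (-1) ^ n := by rw [← inv_pow, inv_neg, inv_one]
  rw [← h_loop, zpow_neg, h_pow, inv_neg, inv_neg, mul_inv, h_inv] at h_S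
  rw [Δ, zpow_neg, zpow_neg, zpow_ofNat, div_eq_iff (A_sq_sub_inv_ne_zero hr)]
  linear_combination h_S

lemma Δ_sub_one_eq_zero (hr : 1 ≤ r) : Δ r (r - 1) = 0 := by
  have hr' : (r : ℂ) ≠ 0 := by exact_mod_cast Nat.one_le_iff_ne_zero.1 hr
  have h_cast : ((r - 1 : ℕ) : ℤ) + 1 = r := by omega
  rw [Δ, h_cast, A_zpow_sub_zpow_neg]
  simp [hr']

lemma eval_S_sub_one_loopValue (hr : 2 ≤ r) : (S ℂ (r - 1)).eval (loopValue r) = 0 := by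
  have h_cast : (r : ℤ) - 1 = (r - 1 : ℕ) := by omega
  rw [h_cast, ← Δ_eq_eval_S hr, Δ_sub_one_eq_zero (by omega)]

end QuantumDimension

theorem theta_curve_eq_handcuffs_general {R : Type*} [CommRing R] {x : R} {r : ℕ}
    (hx : (S R (r - 1)).eval x = 0) :
    ∑ p ∈ range (r - 1) ×ˢ range (r - 1) ×ˢ range (r - 1) with Admissible r p.1 p.2.1 p.2.2,
      (S R p.1).eval x * (S R p.2.1).eval x * (S R p.2.2).eval x =
    (∑ n ∈ range (r - 1), (S R n).eval x ^ 2) ^ 2 := by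
  rw [sum_filter, sum_product, sq (∑ n ∈ range (r - 1), _), sum_mul_sum]
  refine sum_congr rfl fun i hi => ?_
  rw [sum_product]
  refine sum_congr rfl fun j hj => ?_
  dsimp only
  rw [← sum_filter, ← mul_sum, sum_admissible_eval_S hx (mem_range.1 hi) (mem_range.1 hj)]
  ring

/-- the sum of `Δ_i Δ_j Δ_k` over all admissible triples `(i,j,k) ∈ I³`
equals `(Σ_{n=0}^{r−2} Δ_n²)²`: the theta-curve computation of the invariant of the
trivial genus-2 handlebody-knot agrees with the handcuffs-diagram computation. -/
theorem theta_curve_eq_handcuffs (r : ℕ) (hr : 3 ≤ r) :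
    ∑ p ∈ (Finset.range (r - 1) ×ˢ Finset.range (r - 1) ×ˢ Finset.range (r - 1)).filter
        (fun p => Admissible r p.1 p.2.1 p.2.2),
      Δ r p.1 * Δ r p.2.1 * Δ r p.2.2 =
    (∑ n ∈ Finset.range (r - 1), (Δ r n) ^ 2) ^ 2 := by
  simpa only [Δ_eq_eval_S (show 2 ≤ r by omega)] using
    theta_curve_eq_handcuffs_general (eval_S_sub_one_loopValue (show 2 ≤ r by omega))
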